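/- arXiv:2408.06873 — 4 statements merged into one kernel-verified Lean document; each statement's English description precedes it below -/
import Mathlib

section
/- Borda's rule BO, Split Cycle SC, and the weighted Uncovered Set wUC all satisfy monotonicity: for every n-weighted tournament T=(V,w), every S∈{BO,SC,wUC}, all alternatives a,b∈V with a∈S(T) and w(a,b)<n, we have a∈S(T^R), where R is the reversal function with R(a,b)=1, R(b,a)=−1, and R=0 on all other pairs. -/
/-!
The reversal only increases weights `w a z` out of `a` and never increases a weight `w y z` with
`y ≠ a` (`singleFun_self_nonneg`, `singleFun_nonpos`). For Borda's rule this says that the score of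
`a` does not drop and no other score rises; for the weighted uncovered set it says that an
alternative covering `a` after the reversal already covered `a` before it.

For Split Cycle, an edge `(y, x)` of positive margin `k` is a splitting edge of some dominance cycle
iff `y` can be reached from `x` along edges of margin at least `k`
(`exists_splitting_iff_reflTransGen`). Suppose `(y, a)` still has positive margin after the
reversal. Since `a` won, there was a path from `a` to `y` along edges at least as strong as
`(y, a)`; cutting it at its last visit to `a`, it may be assumed never to enter `a`. The only edge
weakened by the reversal is `(b, a)`, which enters `a`, so the path is still strong enough,
and `(y, a)` itself has not become stronger.
-/

/-- An `n`-weighted tournament on vertex set `V`. -/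
structure WTournament (V : Type) (n : ℕ) where
  w : V → V → ℤ
  diag : ∀ x, w x x = 0
  nonneg : ∀ x y, x ≠ y → 0 ≤ w x y
  compl : ∀ x y, x ≠ y → w x y + w y x = (n : ℤ)

namespace WTournament

variable {V : Type} {n : ℕ}

/-- The (majority) margin of `x` over `y`. -/
def margin (T : WTournament V n) (x y : V) : ℤ :=
  T.w x y - T.w y x

/-- The Borda score of `x`. -/
def sBO [Fintype V] (T : WTournament V n) (x : V) : ℤ :=
  ∑ z, T.w x z

/-- The set of Borda winners. -/
def BO [Fintype V] (T : WTournament V n) : Set V :=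
  {x | ∀ y, T.sBO y ≤ T.sBO x}

/-- The weighted outdegree of `x`. -/
def wdeg [Fintype V] (T : WTournament V n) (x : V) : ℤ :=
  ∑ z, T.w x z

/-- `x` w-covers `y`. -/
def WCovers (T : WTournament V n) (x y : V) : Prop :=
  0 < T.margin x y ∧ ∀ z, z ≠ x → z ≠ y → T.w y z ≤ T.w x z

/-- The weighted uncovered set. -/
def wUC (T : WTournament V n) : Set V :=
  {x | ∀ y, ¬ T.WCovers y x}

/-- The consecutive edges of a vertex sequence. -/
def seqEdges (l : List V) : List (V × V) :=
  l.zip l.tail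

/-- A dominance cycle. -/
def IsDominanceCycle (T : WTournament V n) (l : List V) : Prop :=
  2 ≤ l.length ∧ l.head? = l.getLast? ∧ ∀ e ∈ seqEdges l, 0 < T.margin e.1 e.2

/-- The splitting number of a cycle. -/
def splitNum (T : WTournament V n) (l : List V) : ℤ :=
  ((seqEdges l).map fun e => T.margin e.1 e.2).foldr min (n : ℤ)

/-- `e` is a splitting edge of the cycle `l`. -/
def IsSplittingEdge (T : WTournament V n) (l : List V) (e : V × V) : Prop :=
  e ∈ seqEdges l ∧ T.margin e.1 e.2 = T.splitNum l

/-- `(x, y)` is an edge of the margin graph surviving the deletion of every splitting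
edge of every dominance cycle (i.e. an edge of `M_D`). -/
def EdgeMD (T : WTournament V n) (x y : V) : Prop :=
  0 < T.margin x y ∧
    ¬ ∃ l : List V, T.IsDominanceCycle l ∧ T.IsSplittingEdge l (x, y)

/-- The set of Split Cycle winners. -/
def SC (T : WTournament V n) : Set V :=
  {x | ∀ y, ¬ T.EdgeMD y x}

/-- A reversal function for the tournament `T`. -/
structure Reversal (T : WTournament V n) where
  r : V → V → ℤ
  antisymm : ∀ x y, r x y = - r y x
  lo : ∀ x y, x ≠ y → 0 ≤ T.w x y + r x y
  hi : ∀ x y, x ≠ y → T.w x y + r x y ≤ (n : ℤ)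

/-- The size of a reversal function. -/
def Reversal.size [Fintype V] {T : WTournament V n} (R : Reversal T) : ℤ :=
  ∑ x : V, ∑ y : V, max (R.r x y) 0

/-- The tournament obtained from `T` by the reversal `R`. -/
def apply (T : WTournament V n) (R : Reversal T) : WTournament V n :=
  { w := fun x y => T.w x y + R.r x y
    diag := fun x => by
      have h := R.antisymm x x
      have h1 := T.diag x
      show T.w x x + R.r x x = 0
      linarith
    nonneg := fun x y h => R.lo x y h
    compl := fun x y h => by
      have h1 := R.antisymm x y
      have h2 := T.compl x y h
      show (T.w x y + R.r x y) + (T.w y x + R.r y x) = (n : ℤ)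
      linarith }

/-- `R` witnesses the margin of victory of `a`: it is a destructive reversal set if
`a` is a winner and a constructive reversal set if `a` is a non-winner. -/
def IsMoVWitness (S : WTournament V n → Set V) (T : WTournament V n) (a : V)
    (R : Reversal T) : Prop :=
  a ∈ S T ↔ a ∉ S (T.apply R)

open Classical in
/-- The margin of victory of `a` in `T` with respect to the tournament solution `S`:
the minimum size of a destructive reversal set for winners, and minus the minimum
size of a constructive reversal set for non-winners. -/
noncomputable def MoV [Fintype V] (S : WTournament V n → Set V)
    (T : WTournament V n) (a : V) : ℤ :=
  if a ∈ S T then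
    sInf {k : ℤ | ∃ R : Reversal T, IsMoVWitness S T a R ∧ R.size = k}
  else
    - sInf {k : ℤ | ∃ R : Reversal T, IsMoVWitness S T a R ∧ R.size = k}

/-- The reversal values with `R (a, b) = 1`, `R (b, a) = -1` and `0` elsewhere. -/
def singleFun [DecidableEq V] (a b : V) : V → V → ℤ := fun p q =>
  if p = a ∧ q = b then 1 else if p = b ∧ q = a then -1 else 0

/-- The reversal values with `Q (b, c) = -1`, `Q (c, b) = 1`, `Q (a, c) = 1`,
`Q (c, a) = -1` and `0` elsewhere. -/
def transferFun [DecidableEq V] (a b c : V) : V → V → ℤ := fun p q =>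
  if p = b ∧ q = c then -1
  else if p = c ∧ q = b then 1
  else if p = a ∧ q = c then 1
  else if p = c ∧ q = a then -1
  else 0

/-- A monotonic tournament solution. -/
def IsMonotonic [DecidableEq V] (S : WTournament V n → Set V) : Prop :=
  ∀ (T : WTournament V n) (a b : V) (R : Reversal T),
    a ≠ b → a ∈ S T → T.w a b < (n : ℤ) → R.r = singleFun a b →
    a ∈ S (T.apply R)

/-- A transfer-monotonic tournament solution. -/
def IsTransferMonotonic [DecidableEq V] (S : WTournament V n → Set V) : Prop :=
  ∀ (T : WTournament V n) (a b c : V) (Q : Reversal T),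
    a ≠ b → a ≠ c → b ≠ c → a ∈ S T → 0 < T.w b c → T.w a c < (n : ℤ) →
    Q.r = transferFun a b c → a ∈ S (T.apply Q)

end WTournament

namespace WTournament

variable {V : Type} {n : ℕ}

lemma singleFun_self_nonneg [DecidableEq V] {a b : V} (hab : a ≠ b) (z : V) :
    0 ≤ singleFun a b a z := by
  unfold singleFun
  split_ifs <;> simp_all

lemma singleFun_nonpos [DecidableEq V] {a b y : V} (hy : y ≠ a) (z : V) :
    singleFun a b y z ≤ 0 := by
  unfold singleFun
  split_ifs <;> simp_all

/-- A weight `w y z` with `z ≠ a` does not drop: the only decreasing weight is `w b a`. -/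
lemma singleFun_nonneg [DecidableEq V] {a b z : V} (hz : z ≠ a) (y : V) :
    0 ≤ singleFun a b y z := by
  unfold singleFun
  split_ifs <;> simp_all

lemma apply_w (T : WTournament V n) (R : Reversal T) (x y : V) :
    (T.apply R).w x y = T.w x y + R.r x y := rfl

lemma margin_self (T : WTournament V n) (x : V) : T.margin x x = 0 := sub_self _

lemma margin_le (T : WTournament V n) (x y : V) : T.margin x y ≤ n := by
  by_cases h : x = y
  · subst h
    rw [margin_self]
    positivity
  · have h1 := T.compl x y h
    have h2 := T.nonneg y x (Ne.symm h)
    unfold margin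
    linarith

/-! ### Monotonicity of Borda's rule and of the weighted uncovered set -/

lemma isMonotonic_BO [Fintype V] [DecidableEq V] :
    IsMonotonic (BO : WTournament V n → Set V) := by
  intro T a b R hab ha _ hR y
  by_cases hy : y = a
  · rw [hy]
  refine le_trans (Finset.sum_le_sum fun z _ => ?_)
    (le_trans (ha y) (Finset.sum_le_sum fun z _ => ?_))
  · have := singleFun_nonpos (b := b) hy z
    rw [apply_w, hR]
    linarith
  · have := singleFun_self_nonneg hab z
    rw [apply_w, hR]
    linarith

lemma isMonotonic_wUC [DecidableEq V] :
    IsMonotonic (wUC : WTournament V n → Set V) := by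
  intro T a b R hab ha _ hR y hcov
  obtain ⟨hpos, hle⟩ := hcov
  have hy : y ≠ a := by
    rintro rfl
    simp [margin_self] at hpos
  refine ha y ⟨?_, fun z hzy hza => ?_⟩
  · have h1 := singleFun_nonpos (b := b) hy a
    have h2 := singleFun_self_nonneg hab y
    simp only [margin, apply_w, hR] at hpos ⊢
    linarith
  · have h1 := singleFun_nonpos (b := b) hy z
    have h2 := singleFun_self_nonneg hab z
    have h3 := hle z hzy hza
    simp only [apply_w, hR] at h3
    linarith

/-! ### Splitting edges and strong paths -/

lemma seqEdges_cons_cons (x y : V) (l : List V) :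
    seqEdges (x :: y :: l) = (x, y) :: seqEdges (y :: l) := rfl

lemma le_splitNum_iff (T : WTournament V n) (l : List V) (k : ℤ) :
    k ≤ T.splitNum l ↔ k ≤ n ∧ ∀ e ∈ seqEdges l, k ≤ T.margin e.1 e.2 := by
  unfold splitNum
  induction seqEdges l with
  | nil => simp
  | cons e l ih =>
    simp only [List.map_cons, List.foldr_cons, le_min_iff, ih, List.forall_mem_cons]
    tauto

/-- A vertex sequence yields a path from its head to its last vertex. -/
lemma reflTransGen_of_seqEdges {r : V → V → Prop} (l : List V) :
    ∀ x y : V, (∀ e ∈ seqEdges (x :: l), r e.1 e.2) → (x :: l).getLast? = some y →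
      Relation.ReflTransGen r x y := by
  induction l with
  | nil =>
    intro x y _ h
    simp only [List.getLast?_singleton, Option.some.injEq] at h
    rw [h]
  | cons z l ih =>
    intro x y hr h
    rw [seqEdges_cons_cons, List.forall_mem_cons] at hr
    exact .head hr.1 (ih z y hr.2 (by simpa using h))

/-- If `(y, x)` is an edge of a vertex sequence from `u` to `v`, then there are paths
from `u` to `y` and from `x` to `v`. -/
lemma reflTransGen_of_mem_seqEdges {r : V → V → Prop} (l : List V) :
    ∀ u v x y : V, (∀ e ∈ seqEdges (u :: l), r e.1 e.2) → (u :: l).getLast? = some v →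
      (y, x) ∈ seqEdges (u :: l) →
      Relation.ReflTransGen r u y ∧ Relation.ReflTransGen r x v := by
  induction l with
  | nil =>
    intro u v x y _ _ h
    simp [seqEdges] at h
  | cons z l ih =>
    intro u v x y hr h hmem
    have h' : (z :: l).getLast? = some v := by simpa using h
    rw [seqEdges_cons_cons, List.forall_mem_cons] at hr
    rw [seqEdges_cons_cons, List.mem_cons] at hmem
    rcases hmem with heq | hmem
    · obtain ⟨rfl, rfl⟩ := Prod.mk.inj heq
      exact ⟨.refl, reflTransGen_of_seqEdges l _ v hr.2 h'⟩
    · obtain ⟨h1, h2⟩ := ih z v x y hr.2 h' hmem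
      exact ⟨.head hr.1 h1, h2⟩

/-- A path is realised by a vertex sequence. -/
lemma exists_seqEdges_of_reflTransGen {r : V → V → Prop} {x y : V}
    (h : Relation.ReflTransGen r x y) :
    ∃ l : List V, (∀ e ∈ seqEdges (x :: l), r e.1 e.2) ∧ (x :: l).getLast? = some y := by
  induction h using Relation.ReflTransGen.head_induction_on with
  | refl => exact ⟨[], by simp [seqEdges], rfl⟩
  | @head u v huv _ ih =>
    obtain ⟨l, hl, hlast⟩ := ih
    refine ⟨v :: l, ?_, by simpa using hlast⟩
    rw [seqEdges_cons_cons, List.forall_mem_cons]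
    exact ⟨huv, hl⟩

/-- An edge `(y, x)` of the margin graph is a splitting edge of some dominance cycle iff `y` can be
reached from `x` along edges of margin at least that of `(y, x)`. -/
lemma exists_splitting_iff_reflTransGen (T : WTournament V n) {x y : V}
    (hpos : 0 < T.margin y x) :
    (∃ l : List V, T.IsDominanceCycle l ∧ T.IsSplittingEdge l (y, x)) ↔
      Relation.ReflTransGen (fun u v => T.margin y x ≤ T.margin u v) x y := by
  constructor
  · rintro ⟨l, ⟨_, hcyc, _⟩, hmem, hsplit⟩
    have hle := ((T.le_splitNum_iff l _).1 hsplit.le).2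
    cases l with
    | nil => simp [seqEdges] at hmem
    | cons u l =>
      -- Going around the cycle from `x` to its base point `u`, and on from `u` to `y`.
      obtain ⟨h1, h2⟩ := reflTransGen_of_mem_seqEdges
        (r := fun u v => T.margin y x ≤ T.margin u v) l u u x y hle (by simpa using hcyc.symm) hmem
      exact h2.trans h1
  · intro h
    obtain ⟨l, hl, hlast⟩ := exists_seqEdges_of_reflTransGen h
    have hall : ∀ e ∈ seqEdges (y :: x :: l), T.margin y x ≤ T.margin e.1 e.2 := by
      rw [seqEdges_cons_cons, List.forall_mem_cons]
      exact ⟨le_rfl, hl⟩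
    have hmem : (y, x) ∈ seqEdges (y :: x :: l) := by simp [seqEdges_cons_cons]
    refine ⟨y :: x :: l, ⟨by simp, ?_, fun e he => hpos.trans_le (hall e he)⟩, hmem, ?_⟩
    · rw [List.getLast?_cons_cons, hlast, List.head?_cons]
    · exact le_antisymm ((T.le_splitNum_iff _ _).2 ⟨T.margin_le y x, hall⟩)
        (((T.le_splitNum_iff _ _).1 le_rfl).2 _ hmem)

/-! ### Monotonicity of Split Cycle -/

/-- A path starting at `a` can be cut at its last visit to `a`, so that it never enters `a`. -/
lemma reflTransGen_avoid_start {r : V → V → Prop} {a y : V} (h : Relation.ReflTransGen r a y) :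
    Relation.ReflTransGen (fun u v => r u v ∧ v ≠ a) a y := by
  induction h with
  | refl => exact .refl
  | @tail c d _ hcd ih =>
    by_cases hd : d = a
    · rw [hd]
    · exact ih.tail ⟨hcd, hd⟩

lemma isMonotonic_SC [DecidableEq V] :
    IsMonotonic (SC : WTournament V n → Set V) := by
  rintro T a b R hab ha _ hR y ⟨hpos, hno⟩
  have hy : y ≠ a := by
    rintro rfl
    simp [margin_self] at hpos
  have hle : (T.apply R).margin y a ≤ T.margin y a := by
    have h1 := singleFun_nonpos (b := b) hy a
    have h2 := singleFun_self_nonneg hab y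
    simp only [margin, apply_w, hR]
    linarith
  have hposT : 0 < T.margin y a := hpos.trans_le hle
  have hpath : Relation.ReflTransGen (fun u v => T.margin y a ≤ T.margin u v) a y := by
    rw [← T.exists_splitting_iff_reflTransGen hposT]
    by_contra hcon
    exact ha y ⟨hposT, hcon⟩
  refine hno (((T.apply R).exists_splitting_iff_reflTransGen hpos).2 ?_)
  refine Relation.ReflTransGen.mono ?_ _ _ (reflTransGen_avoid_start hpath)
  rintro u v ⟨huv, hva⟩
  have h1 := singleFun_nonneg (b := b) hva u
  have h2 := singleFun_nonpos (b := b) hva u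
  simp only [margin, apply_w, hR] at hle huv ⊢
  linarith

end WTournament

/-- Borda's rule, Split Cycle and the weighted uncovered set are
monotonic. -/
theorem BO_SC_wUC_monotonic {V : Type} [Fintype V] [DecidableEq V] {n : ℕ} :
    ∀ S ∈ ({WTournament.BO, WTournament.SC, WTournament.wUC} :
        Set (WTournament V n → Set V)),
      WTournament.IsMonotonic S := by
  rintro S (rfl | rfl | rfl)
  · exact WTournament.isMonotonic_BO
  · exact WTournament.isMonotonic_SC
  · exact WTournament.isMonotonic_wUC
end

section
/- Let S be any weighted tournament solution that is monotonic. Then MoV_S is monotonic: for every n-weighted tournament T=(V,w), all alternatives a,b∈V with w(a,b)<n, MoV_S(a,T^Q) ≥ MoV_S(a,T), where Q is the reversal function with Q(a,b)=1, Q(b,a)=−1, and Q=0 on all other pairs. -/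
namespace WTournament

variable {V : Type} {n : ℕ}

theorem eq_of_w_eq {T U : WTournament V n} (h : ∀ x y, T.w x y = U.w x y) : T = U := by
  cases T
  cases U
  congr
  funext x y
  exact h x y

theorem singleFun_antisymm [DecidableEq V] {a b : V} (hab : a ≠ b) (x y : V) :
    singleFun a b x y = -singleFun a b y x := by
  unfold singleFun
  grind

theorem Reversal.size_nonneg [Fintype V] {T : WTournament V n} (R : Reversal T) :
    0 ≤ R.size :=
  Finset.sum_nonneg fun _ _ => Finset.sum_nonneg fun _ _ => le_max_right _ _

theorem Reversal.size_le_of_posPart_le [Fintype V] {T U : WTournament V n} (R : Reversal T)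
    (R' : Reversal U) (h : ∀ x y, max (R.r x y) 0 ≤ max (R'.r x y) 0) : R.size ≤ R'.size :=
  Finset.sum_le_sum fun x _ => Finset.sum_le_sum fun y _ => h x y

/-- The form of monotonicity that compares two tournaments differing by one unit on `(a, b)`. -/
theorem IsMonotonic.mem_of_w_eq [DecidableEq V] {S : WTournament V n → Set V}
    (hmono : IsMonotonic S) {T U : WTournament V n} {a b : V} (hab : a ≠ b)
    (h : ∀ x y, U.w x y = T.w x y + singleFun a b x y) (ha : a ∈ S T) : a ∈ S U := by
  have hlt : T.w a b < (n : ℤ) := by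
    have h1 := h a b
    have h2 := U.compl a b hab
    have h3 := U.nonneg b a hab.symm
    simp [singleFun] at h1
    linarith
  let R : Reversal T :=
    { r := singleFun a b
      antisymm := singleFun_antisymm hab
      lo := fun x y hxy => by rw [← h]; exact U.nonneg x y hxy
      hi := fun x y hxy => by
        rw [← h]
        linarith [U.compl x y hxy, U.nonneg y x hxy.symm] }
  have hU : T.apply R = U := eq_of_w_eq fun x y => (h x y).symm
  exact hU ▸ hmono T a b R hab ha hlt rfl

/-- Every reversal of `T^Q` is matched by a reversal of `T` that is no larger and after which `a`
wins only if it wins after the given one. -/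
theorem exists_reversal_before [Fintype V] [DecidableEq V] {S : WTournament V n → Set V}
    (hmono : IsMonotonic S) {T : WTournament V n} {a b : V} (Q : Reversal T) (hab : a ≠ b)
    (hQ : Q.r = singleFun a b) (R' : Reversal (T.apply Q)) :
    ∃ R : Reversal T, R.size ≤ R'.size ∧
      (a ∈ S (T.apply R) → a ∈ S ((T.apply Q).apply R')) := by
  have hw : ∀ x y, (T.apply Q).w x y = T.w x y + singleFun a b x y := fun x y => by
    rw [← hQ]; rfl
  have hanti := R'.antisymm a b
  by_cases hneg : R'.r a b < 0
  · let R : Reversal T :=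
      { r := fun x y => singleFun a b x y + R'.r x y
        antisymm := fun x y => by
          linarith [singleFun_antisymm hab x y, R'.antisymm x y]
        lo := fun x y hxy => by linarith [R'.lo x y hxy, hw x y]
        hi := fun x y hxy => by linarith [R'.hi x y hxy, hw x y] }
    refine ⟨R, R.size_le_of_posPart_le R' fun x y => ?_, fun h => ?_⟩
    · change max (singleFun a b x y + R'.r x y) 0 ≤ _
      unfold singleFun
      grind
    · have hEq : T.apply R = (T.apply Q).apply R' := eq_of_w_eq fun x y => by
        change T.w x y + (singleFun a b x y + R'.r x y) = (T.apply Q).w x y + R'.r x y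
        rw [hw]
        ring
      exact hEq ▸ h
  · have hlo : ∀ x y, x ≠ y → 0 ≤ T.w x y + R'.r x y := fun x y hxy => by
      have h1 := R'.lo x y hxy
      have h2 := T.nonneg x y hxy
      rw [hw] at h1
      unfold singleFun at h1
      grind
    let R : Reversal T :=
      { r := R'.r
        antisymm := R'.antisymm
        lo := hlo
        hi := fun x y hxy => by
          linarith [hlo y x hxy.symm, T.compl x y hxy, R'.antisymm x y] }
    refine ⟨R, le_rfl, hmono.mem_of_w_eq hab fun x y => ?_⟩
    change (T.apply Q).w x y + R'.r x y = T.w x y + R'.r x y + singleFun a b x y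
    rw [hw]
    ring

/-- Every reversal of `T` is matched by a reversal of `T^Q` that is no larger and after which `a`
wins if it wins after the given one. -/
theorem exists_reversal_after [Fintype V] [DecidableEq V] {S : WTournament V n → Set V}
    (hmono : IsMonotonic S) {T : WTournament V n} {a b : V} (Q : Reversal T) (hab : a ≠ b)
    (hQ : Q.r = singleFun a b) (R : Reversal T) :
    ∃ R' : Reversal (T.apply Q), R'.size ≤ R.size ∧
      (a ∈ S (T.apply R) → a ∈ S ((T.apply Q).apply R')) := by
  have hw : ∀ x y, (T.apply Q).w x y = T.w x y + singleFun a b x y := fun x y => by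
    rw [← hQ]; rfl
  have hanti := R.antisymm a b
  by_cases hpos : 0 < R.r a b
  · let R' : Reversal (T.apply Q) :=
      { r := fun x y => R.r x y - singleFun a b x y
        antisymm := fun x y => by
          linarith [singleFun_antisymm hab x y, R.antisymm x y]
        lo := fun x y hxy => by linarith [R.lo x y hxy, hw x y]
        hi := fun x y hxy => by linarith [R.hi x y hxy, hw x y] }
    refine ⟨R', R'.size_le_of_posPart_le R fun x y => ?_, fun h => ?_⟩
    · change max (R.r x y - singleFun a b x y) 0 ≤ _
      unfold singleFun
      grind
    · have hEq : T.apply R = (T.apply Q).apply R' := eq_of_w_eq fun x y => by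
        change T.w x y + R.r x y = (T.apply Q).w x y + (R.r x y - singleFun a b x y)
        rw [hw]
        ring
      exact hEq ▸ h
  · have hlo : ∀ x y, x ≠ y → 0 ≤ (T.apply Q).w x y + R.r x y := fun x y hxy => by
      have h1 := R.lo x y hxy
      have h2 := (T.apply Q).nonneg x y hxy
      have h3 := hw x y
      unfold singleFun at h3
      grind
    let R' : Reversal (T.apply Q) :=
      { r := R.r
        antisymm := R.antisymm
        lo := hlo
        hi := fun x y hxy => by
          linarith [hlo y x hxy.symm, (T.apply Q).compl x y hxy, R.antisymm x y] }
    refine ⟨R', le_rfl, hmono.mem_of_w_eq hab fun x y => ?_⟩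
    change (T.apply Q).w x y + R.r x y = T.w x y + R.r x y + singleFun a b x y
    rw [hw]
    ring

theorem sInf_size_nonneg [Fintype V] {T : WTournament V n} (P : Reversal T → Prop)
    (hP : ∃ R, P R) : 0 ≤ sInf {k : ℤ | ∃ R : Reversal T, P R ∧ R.size = k} := by
  obtain ⟨R, hR⟩ := hP
  refine le_csInf ⟨_, R, hR, rfl⟩ ?_
  rintro _ ⟨R, -, rfl⟩
  exact R.size_nonneg

theorem sInf_size_le [Fintype V] {T U : WTournament V n} (P : Reversal T → Prop)
    (P' : Reversal U → Prop) (hP' : ∃ R, P' R)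
    (h : ∀ R', P' R' → ∃ R, P R ∧ R.size ≤ R'.size) :
    sInf {k : ℤ | ∃ R : Reversal T, P R ∧ R.size = k} ≤
      sInf {k : ℤ | ∃ R : Reversal U, P' R ∧ R.size = k} := by
  obtain ⟨R₀, hR₀⟩ := hP'
  refine le_csInf ⟨_, R₀, hR₀, rfl⟩ ?_
  rintro _ ⟨R', hR', rfl⟩
  obtain ⟨R, hR, hle⟩ := h R' hR'
  refine le_trans (csInf_le ?_ ⟨R, hR, rfl⟩) hle
  refine ⟨0, ?_⟩
  rintro _ ⟨R, -, rfl⟩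
  exact R.size_nonneg

end WTournament

/-- if a tournament solution `S` is monotonic, then `MoV_S` is
monotonic as well. -/
theorem MoV_monotonic_of_monotonic {V : Type} [Fintype V] [DecidableEq V] {n : ℕ}
    (S : WTournament V n → Set V)
    (hne : ∀ T : WTournament V n, (S T).Nonempty)
    (hEx : ∀ (T : WTournament V n) (a : V),
      ∃ R : WTournament.Reversal T, WTournament.IsMoVWitness S T a R)
    (hmono : WTournament.IsMonotonic S) :
    ∀ (T : WTournament V n) (a b : V) (Q : WTournament.Reversal T),
      a ≠ b → T.w a b < (n : ℤ) → Q.r = WTournament.singleFun a b →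
      WTournament.MoV S T a ≤ WTournament.MoV S (T.apply Q) a := by
  intro T a b Q hab hlt hQ
  unfold WTournament.MoV
  by_cases haT : a ∈ S T
  · have haT' : a ∈ S (T.apply Q) := hmono T a b Q hab haT hlt hQ
    rw [if_pos haT, if_pos haT']
    refine WTournament.sInf_size_le _ _ (hEx _ a) fun R' hR' => ?_
    obtain ⟨R, hle, himp⟩ := WTournament.exists_reversal_before hmono Q hab hQ R'
    exact ⟨R, iff_of_true haT fun h => hR'.1 haT' (himp h), hle⟩
  · rw [if_neg haT]
    by_cases haT' : a ∈ S (T.apply Q)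
    · rw [if_pos haT']
      exact (neg_nonpos.mpr (WTournament.sInf_size_nonneg _ (hEx T a))).trans
        (WTournament.sInf_size_nonneg _ (hEx _ a))
    · rw [if_neg haT', neg_le_neg_iff]
      refine WTournament.sInf_size_le _ _ (hEx T a) fun R hR => ?_
      obtain ⟨R', hle, himp⟩ := WTournament.exists_reversal_after hmono Q hab hQ R
      have hwin : a ∈ S (T.apply R) := not_not.mp fun h => haT (hR.2 h)
      exact ⟨R', iff_of_false haT' fun h => h (himp hwin), hle⟩
end

section
/- Split Cycle does not satisfy transfer-monotonicity: there exist an n (e.g. n=10), an n-weighted tournament T=(V,w) and alternatives a,b,c∈V with a∈SC(T), w(b,c)>0 and w(a,c)<n, such that a∉SC(T^Q), where Q is the reversal function with Q(b,c)=−1, Q(c,b)=1, Q(a,c)=1, Q(c,a)=−1, and Q=0 on all other pairs. -/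
/-- The `2`-weighted tournament on `a = 2`, `b = 3`, `c = 0`, `d = 1`, given by its weight
matrix. -/
def counterexample : WTournament (Fin 4) 2 where
  w := ![![0, 2, 2, 0], ![0, 0, 2, 1], ![0, 0, 0, 2], ![2, 1, 0, 0]]
  diag := by decide
  nonneg := by decide
  compl := by decide

/-- The transfer of one unit against `c = 0` from `b = 3` to `a = 2`. -/
def counterexampleTransfer : WTournament.Reversal counterexample where
  r := WTournament.transferFun 2 3 0
  antisymm := by decide
  lo := by decide
  hi := by decide

/-- In a vertex sequence with at least two entries whose consecutive entries strictly increase, the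
first entry is below the last. -/
lemma head_lt_of_mem_getLast? {V : Type} [Preorder V] (l : List V) :
    ∀ x y : V, (∀ e ∈ WTournament.seqEdges (x :: y :: l), e.1 < e.2) →
      ∀ z ∈ (x :: y :: l).getLast?, x < z := by
  induction l with
  | nil =>
    intro x y h z hz
    have hxy := h (x, y) (by simp [WTournament.seqEdges])
    simp at hz
    exact hz ▸ hxy
  | cons t l ih =>
    intro x y h z hz
    have hxy : x < y := h (x, y) (by simp [WTournament.seqEdges])
    refine hxy.trans (ih y t (fun e he => h e ?_) z ?_)
    · simp only [WTournament.seqEdges, List.tail_cons, List.zip_cons_cons] at he ⊢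
      exact List.mem_cons_of_mem _ he
    · simpa using hz

/-- If the margin graph is compatible with a strict order, there are no dominance cycles. -/
lemma not_isDominanceCycle_of_pos_imp_lt {V : Type} [Preorder V] {n : ℕ} (T : WTournament V n)
    (hT : ∀ x y, 0 < T.margin x y → x < y) (l : List V) : ¬ T.IsDominanceCycle l := by
  rintro ⟨hlen, hends, hpos⟩
  match l, hlen with
  | x :: y :: l, _ =>
    exact lt_irrefl x (head_lt_of_mem_getLast? l x y (fun e he => hT _ _ (hpos e he)) x
      (by rw [← hends]; rfl))

/-- Split Cycle is not transfer-monotonic. -/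
theorem SC_not_transfer_monotonic :
    ∃ (n m : ℕ) (T : WTournament (Fin m) n) (a b c : Fin m)
      (Q : WTournament.Reversal T),
      a ≠ b ∧ a ≠ c ∧ b ≠ c ∧
      a ∈ T.SC ∧ 0 < T.w b c ∧ T.w a c < (n : ℤ) ∧
      Q.r = WTournament.transferFun a b c ∧
      a ∉ (T.apply Q).SC := by
  refine ⟨2, 4, counterexample, 2, 3, 0, counterexampleTransfer, by decide, by decide, by decide,
    ?_, by decide, by decide, rfl, ?_⟩
  · intro y hy
    obtain ⟨hpos, hno⟩ := hy
    apply hno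
    -- Only `0` and `1` beat `2`.
    fin_cases y
    · exact ⟨[2, 3, 0, 2], by unfold WTournament.IsDominanceCycle; decide,
        by unfold WTournament.IsSplittingEdge; decide⟩
    · exact ⟨[2, 3, 0, 1, 2], by unfold WTournament.IsDominanceCycle; decide,
        by unfold WTournament.IsSplittingEdge; decide⟩
    · exact absurd hpos (by decide)
    · exact absurd hpos (by decide)
  · intro h
    refine h 1 ⟨by decide, ?_⟩
    rintro ⟨l, hl, -⟩
    exact not_isDominanceCycle_of_pos_imp_lt (counterexample.apply counterexampleTransfer)
      (by decide) l hl
end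

section
/- For every n-weighted tournament T=(V,w), the set of Borda winners is contained in the weighted Uncovered Set: BO(T) ⊆ wUC(T). -/
/-- the Borda winners are contained in the weighted uncovered set. -/
theorem BO_subset_wUC {V : Type} [Fintype V] {n : ℕ} (T : WTournament V n) :
    T.BO ⊆ T.wUC := by
  classical
  intro x hx y hc
  obtain ⟨hm, hz⟩ := hc
  rw [WTournament.margin] at hm
  -- Reindexing the row of `x` by the swap of `x` and `y` pairs `w x y` with `w y x`
  -- and the two diagonal zeros with each other.
  have hle : ∀ z, T.w x (Equiv.swap x y z) ≤ T.w y z := by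
    intro z
    rcases eq_or_ne z x with rfl | h1
    · rw [Equiv.swap_apply_left]
      linarith
    · rcases eq_or_ne z y with rfl | h2
      · rw [Equiv.swap_apply_right, T.diag, T.diag]
      · rw [Equiv.swap_apply_of_ne_of_ne h1 h2]
        exact hz z h2 h1
  have hlt : ∑ z, T.w x (Equiv.swap x y z) < ∑ z, T.w y z :=
    Finset.sum_lt_sum (fun z _ => hle z)
      ⟨x, Finset.mem_univ x, by rw [Equiv.swap_apply_left]; linarith⟩
  rw [Equiv.sum_comp (Equiv.swap x y) (T.w x)] at hlt
  exact absurd (hx y) (not_le.mpr hlt)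
end
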